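/- Let Z ⊆ ℝ^d be convex, let k ≥ 1, let m₁, …, m_k ∈ ℝ^d and α₁, …, α_k > 0, and let β ∈ ℕ with β ≥ 1. Let x ∈ Z, y := x + Σᵢ αᵢmᵢ ∈ Z, and suppose that for each i: the segment from x to x + (αᵢ/β)·mᵢ lies in Z, and the segment from y − (αᵢ/β)·mᵢ to y lies in Z. Then the piecewise-linear trajectory from x to y obtained by repeating βk times the scaled sequence ((α₁/(βk))m₁, …, (α_k/(βk))m_k) lies entirely in Z. -/

import Mathlib

/-- A schedule is a finite list of (duration, mode) pairs. `StaysIn Z x π` says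
that the piecewise-linear trajectory induced by `π` from `x` remains in `Z`. -/
def StaysIn {d : ℕ} (Z : Set (Fin d → ℝ)) : (Fin d → ℝ) → List (ℝ × (Fin d → ℝ)) → Prop
  | x, [] => x ∈ Z
  | x, (a, m) :: rest =>
      (∀ t ∈ Set.Icc (0 : ℝ) a, x + t • m ∈ Z) ∧ StaysIn Z (x + a • m) rest

/-!
Let `D` be the total displacement of one period, so that `y = x + βk • D`, and let `P` be the
parallelepiped spanned by the steps of one period. Averaging the `k` initial segments shows
`x + P ⊆ Z`, and averaging the `k` final segments shows `(y - D) + P ⊆ Z`. By convexity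
`(x + j • D) + P ⊆ Z` for `0 ≤ j ≤ βk - 1`, and the `j`-th period never leaves `(x + j • D) + P`.
-/

open Set
open scoped Pointwise

section Convexity

variable {E : Type*} [AddCommGroup E] [Module ℝ E] {Z : Set E}

theorem add_smul_mem_of_mem_Icc (hZ : Convex ℝ Z) {p v : E} {s t : ℝ} (hp : p ∈ Z)
    (hpt : p + t • v ∈ Z) (hs : s ∈ Icc 0 t) : p + s • v ∈ Z := by
  have hline : Convex ℝ ((fun r : ℝ => r • v) ⁻¹' ((fun u => p + u) ⁻¹' Z)) :=
    (hZ.translate_preimage_right p).is_linear_preimage (IsLinearMap.isLinearMap_smul' v)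
  exact hline.ordConnected.out (by simpa using hp) hpt hs

theorem smul_mem_segment_zero_smul {a t : ℝ} (m : E) (ht : t ∈ Icc 0 a) :
    t • m ∈ segment ℝ 0 (a • m) := by
  simpa using add_smul_mem_of_mem_Icc (convex_segment 0 (a • m)) (left_mem_segment ℝ _ _)
    (by simpa using right_mem_segment ℝ 0 (a • m)) ht

variable {ι : Type*} [Fintype ι] [Nonempty ι]

theorem add_sum_mem_of_add_card_smul_mem (hZ : Convex ℝ Z) {x : E} {v : ι → E}
    (h : ∀ i, x + (Fintype.card ι : ℝ) • v i ∈ Z) : x + ∑ i, v i ∈ Z := by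
  have hcard : (Fintype.card ι : ℝ) ≠ 0 := by simp
  have haverage : ∑ i, (Fintype.card ι : ℝ)⁻¹ • (x + (Fintype.card ι : ℝ) • v i) ∈ Z :=
    hZ.sum_mem (fun _ _ => by positivity) (by simp) fun i _ => h i
  simpa [smul_add, Finset.sum_add_distrib, ← Nat.cast_smul_eq_nsmul ℝ, smul_smul, hcard]
    using haverage

theorem add_mem_of_mem_parallelepiped (hZ : Convex ℝ Z) {x q : E} {w : ι → E}
    (h : ∀ i, ∀ t ∈ Icc (0 : ℝ) 1, x + t • (Fintype.card ι : ℝ) • w i ∈ Z)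
    (hq : q ∈ parallelepiped w) : x + q ∈ Z := by
  obtain ⟨t, ht, rfl⟩ := (mem_parallelepiped_iff w q).1 hq
  refine add_sum_mem_of_add_card_smul_mem hZ fun i => ?_
  simpa only [smul_comm (t i)] using h i (t i) ⟨ht.1 i, ht.2 i⟩

theorem sub_sum_add_mem_of_mem_parallelepiped (hZ : Convex ℝ Z) {y q : E} {w : ι → E}
    (h : ∀ i, ∀ t ∈ Icc (0 : ℝ) 1,
      y - (Fintype.card ι : ℝ) • w i + t • (Fintype.card ι : ℝ) • w i ∈ Z)
    (hq : q ∈ parallelepiped w) : y - ∑ i, w i + q ∈ Z := by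
  obtain ⟨t, ht, rfl⟩ := (mem_parallelepiped_iff w q).1 hq
  have hmem : y + ∑ i, (t i • w i - w i) ∈ Z := by
    refine add_sum_mem_of_add_card_smul_mem hZ fun i => ?_
    convert h i (t i) ⟨ht.1 i, ht.2 i⟩ using 1
    module
  rw [Finset.sum_sub_distrib] at hmem
  convert hmem using 1
  abel

theorem add_smul_sum_add_mem_of_mem_parallelepiped (hZ : Convex ℝ Z) {x q : E} {w : ι → E}
    {s T : ℝ} (hs : s ∈ Icc 0 (T - 1))
    (hfirst : ∀ i, ∀ t ∈ Icc (0 : ℝ) 1, x + t • (Fintype.card ι : ℝ) • w i ∈ Z)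
    (hlast : ∀ i, ∀ t ∈ Icc (0 : ℝ) 1,
      x + T • ∑ i, w i - (Fintype.card ι : ℝ) • w i + t • (Fintype.card ι : ℝ) • w i ∈ Z)
    (hq : q ∈ parallelepiped w) : x + s • ∑ i, w i + q ∈ Z := by
  have hx : x + q ∈ Z := add_mem_of_mem_parallelepiped hZ hfirst hq
  have hy : x + q + (T - 1) • ∑ i, w i ∈ Z := by
    convert sub_sum_add_mem_of_mem_parallelepiped hZ hlast hq using 1
    module
  rw [add_right_comm]
  exact add_smul_mem_of_mem_Icc hZ hx hy hs

end Convexity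

section Schedules

variable {E : Type*} [AddCommGroup E] [Module ℝ E]

/-- The total displacement `∑ aᵢ • mᵢ` of a schedule: its trajectory from `x` ends at
`x + displacement π`. -/
def displacement (π : List (ℝ × E)) : E :=
  (π.map fun s => s.1 • s.2).sum

theorem displacement_flatten_replicate (n : ℕ) (π : List (ℝ × E)) :
    displacement (List.replicate n π).flatten = n • displacement π := by
  simp [displacement, List.map_flatten, List.sum_flatten]

theorem displacement_ofFn {k : ℕ} (a : Fin k → ℝ) (m : Fin k → E) :
    displacement (List.ofFn fun i => (a i, m i)) = ∑ i, a i • m i := by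
  simp [displacement, List.map_ofFn, List.sum_ofFn]

variable {d : ℕ} {Z : Set (Fin d → ℝ)} {x : Fin d → ℝ}

theorem StaysIn.append {π₁ π₂ : List (ℝ × (Fin d → ℝ))} (h₁ : StaysIn Z x π₁)
    (h₂ : StaysIn Z (x + displacement π₁) π₂) : StaysIn Z x (π₁ ++ π₂) := by
  induction π₁ generalizing x with
  | nil => simpa [displacement] using h₂
  | cons s π ih => exact ⟨h₁.1, ih h₁.2 (by simpa [displacement, add_assoc] using h₂)⟩

theorem StaysIn.flatten_replicate {π : List (ℝ × (Fin d → ℝ))} {n : ℕ} (hx : x ∈ Z)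
    (h : ∀ j < n, StaysIn Z (x + j • displacement π) π) :
    StaysIn Z x (List.replicate n π).flatten := by
  induction n with
  | zero => exact hx
  | succ n ih =>
    rw [List.replicate_succ', List.flatten_append, List.flatten_singleton]
    refine (ih fun j hj => h j (by lia)).append ?_
    rw [displacement_flatten_replicate]
    exact h n n.lt_succ_self

theorem StaysIn.of_sum_segment {π : List (ℝ × (Fin d → ℝ))}
    (h : ∀ q ∈ (π.map fun s => segment ℝ 0 (s.1 • s.2)).sum, x + q ∈ Z) : StaysIn Z x π := by
  induction π generalizing x with
  | nil => simpa [StaysIn] using h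
  | cons s π ih =>
    rw [List.map_cons, List.sum_cons] at h
    have hzero : 0 ∈ (π.map fun s => segment ℝ 0 (s.1 • s.2)).sum := by
      simpa using Set.list_sum_mem_list_sum π (fun s => segment ℝ 0 (s.1 • s.2)) (fun _ => 0)
        fun s _ => left_mem_segment ℝ 0 (s.1 • s.2)
    refine ⟨fun t ht => ?_, ih fun q hq => ?_⟩
    · simpa using h _ (add_mem_add (smul_mem_segment_zero_smul s.2 ht) hzero)
    · simpa only [add_assoc] using h _ (add_mem_add (right_mem_segment ℝ 0 (s.1 • s.2)) hq)

theorem StaysIn.ofFn {k : ℕ} {a : Fin k → ℝ} {m : Fin k → Fin d → ℝ}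
    (h : ∀ q ∈ parallelepiped (fun i => a i • m i), x + q ∈ Z) :
    StaysIn Z x (List.ofFn fun i => (a i, m i)) := by
  apply StaysIn.of_sum_segment
  simpa only [List.map_ofFn, List.sum_ofFn, parallelepiped_eq_sum_segment, Function.comp_def]
    using h

end Schedules

theorem stmt_16 {d k : ℕ} (hk : 1 ≤ k) (Z : Set (Fin d → ℝ)) (hZ : Convex ℝ Z)
    (m : Fin k → (Fin d → ℝ)) (α : Fin k → ℝ) (hα : ∀ i, 0 < α i)
    (β : ℕ) (hβ : 1 ≤ β)
    (x y : Fin d → ℝ) (hx : x ∈ Z) (hy : y = x + ∑ i, α i • m i) (hyZ : y ∈ Z)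
    (hfwd : ∀ i, ∀ t ∈ Set.Icc (0 : ℝ) 1, x + t • ((α i / β) • m i) ∈ Z)
    (hbwd : ∀ i, ∀ t ∈ Set.Icc (0 : ℝ) 1, (y - (α i / β) • m i) + t • ((α i / β) • m i) ∈ Z) :
    StaysIn Z x
      (List.flatten (List.replicate (β * k)
        (List.ofFn (fun i : Fin k => (α i / (β * k), m i))))) := by
  have : Nonempty (Fin k) := ⟨⟨0, hk⟩⟩
  have hcard (i) : (Fintype.card (Fin k) : ℝ) • (α i / (β * k)) • m i = (α i / β) • m i := by
    rw [Fintype.card_fin, smul_smul]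
    congr 1
    field_simp
  have hsum : ∑ i, α i • m i = ((β : ℝ) * k) • ∑ i, (α i / (β * k)) • m i := by
    simp only [Finset.smul_sum, smul_smul]
    field_simp
  rw [hy, hsum] at hbwd
  refine StaysIn.flatten_replicate hx fun j hj => StaysIn.ofFn fun q hq => ?_
  rw [displacement_ofFn, ← Nat.cast_smul_eq_nsmul ℝ]
  have hj' : (j : ℝ) ∈ Icc 0 ((β : ℝ) * k - 1) :=
    ⟨j.cast_nonneg, le_sub_iff_add_le.2 (by exact_mod_cast hj)⟩
  exact add_smul_sum_add_mem_of_mem_parallelepiped hZ hj'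
    (by simpa only [hcard] using hfwd) (by simpa only [hcard] using hbwd) hq
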